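/- Let n ≥ 1 be a natural number, let α ∈ (4n−1, 4n+1), set ν = (1−α)/2, and let λ satisfy 0 < λ < j_{ν,1}². Then for all real numbers r, s with 0 < r ≤ s ≤ 1, r^ν · (J_{−ν}(s·√λ)·J_ν(r·√λ) − J_ν(s·√λ)·J_{−ν}(r·√λ)) ≤ 0. -/

import Mathlib

/-- The Bessel function of the first kind of real order `μ`. -/
noncomputable def besselJ (μ x : ℝ) : ℝ :=
  ∑' m : ℕ, ((-1 : ℝ) ^ m / ((m.factorial : ℝ) * Real.Gamma ((m : ℝ) + μ + 1))) *
    (x / 2) ^ (2 * (m : ℝ) + μ)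

/-!
Up to a positive factor, the derivative of `J_{-ν} / J_ν` is the Wronskian of `J_ν` and `J_{-ν}`,
which is `-2 sin(πν) / (πx)`. Hence the quotient is antitone on any interval of positive numbers
without zeros of `J_ν` as soon as `sin(πν) ≥ 0`, and clearing denominators, where `J_ν` has constant
sign, gives the inequality. For `ν = (1 - α) / 2` with `4n - 1 < α < 4n + 1` we have
`-2n < ν < 1 - 2n`, where `sin(πν)` is positive.

The Wronskian is computed on the entire factor `C_μ` in `J_μ(x) = (x/2)^μ C_μ(-(x/2)²)`: there it
becomes an entire function with zero derivative, which can be evaluated at the origin.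
-/

lemma hasDerivAt_tsum_mul_pow {𝕜 : Type*} [RCLike 𝕜] {c : ℕ → 𝕜}
    (hc : ∀ z : 𝕜, Summable fun m : ℕ ↦ (m + 1) * c (m + 1) * z ^ m) (z : 𝕜) :
    HasDerivAt (fun z ↦ ∑' m, c m * z ^ m) (∑' m : ℕ, (m + 1) * c (m + 1) * z ^ m) z := by
  set R : ℝ := ‖z‖ + 1 with hR
  have hR_pos : 0 < R := by positivity
  have summable_bound : Summable fun m : ℕ ↦ ‖c m‖ * (m * R ^ (m - 1)) := by
    refine (summable_nat_add_iff 1).1 ((hc R).norm.congr fun m ↦ ?_)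
    have hm : ‖(m + 1 : 𝕜)‖ = m + 1 := by exact_mod_cast RCLike.norm_natCast (K := 𝕜) (m + 1)
    rw [norm_mul, norm_mul, norm_pow, hm, RCLike.norm_ofReal, abs_of_pos hR_pos]
    push_cast [Nat.add_sub_cancel]
    ring
  have term_bound (m : ℕ) (y : 𝕜) (hy : y ∈ Metric.ball 0 R) :
      ‖c m * (m * y ^ (m - 1))‖ ≤ ‖c m‖ * (m * R ^ (m - 1)) := by
    rw [norm_mul, norm_mul, norm_pow, RCLike.norm_natCast]
    gcongr
    exact (mem_ball_zero_iff.1 hy).le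
  have hz : z ∈ Metric.ball 0 R := by simp [hR]
  refine (hasDerivAt_tsum_of_isPreconnected (g := fun m z ↦ c m * z ^ m) summable_bound
    Metric.isOpen_ball (convex_ball 0 R).isPreconnected
    (fun m y _ ↦ (hasDerivAt_pow m y).const_mul (c m)) term_bound (Metric.mem_ball_self hR_pos)
    (summable_of_ne_finset_zero (s := {0}) fun m hm ↦ by simp_all) hz).congr_deriv ?_
  rw [(Summable.of_norm_bounded summable_bound (term_bound · z hz)).tsum_eq_zero_add]
  simp only [Nat.cast_zero, zero_mul, mul_zero, zero_add, Nat.add_sub_cancel, Nat.cast_succ]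
  exact tsum_congr fun m ↦ by ring

lemma mul_pos_of_isPreconnected_of_ne_zero {X : Type*} [TopologicalSpace X] {s : Set X}
    {f : X → ℝ} {a b : X} (hs : IsPreconnected s) (hf : ContinuousOn f s)
    (hf0 : ∀ x ∈ s, f x ≠ 0) (ha : a ∈ s) (hb : b ∈ s) : 0 < f a * f b := by
  by_contra! hab
  obtain ⟨x, hx, hfx⟩ : (0 : ℝ) ∈ f '' s := by
    rcases mul_nonpos_iff.1 hab with ⟨hfa, hfb⟩ | ⟨hfa, hfb⟩
    · exact hs.intermediate_value hb ha hf ⟨hfb, hfa⟩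
    · exact hs.intermediate_value ha hb hf ⟨hfa, hfb⟩
  exact hf0 x hx hfx

lemma inv_Gamma_eq_self_mul_inv_Gamma_add_one (s : ℝ) :
    (Real.Gamma s)⁻¹ = s * (Real.Gamma (s + 1))⁻¹ := by
  rcases eq_or_ne s 0 with rfl | hs
  · simp [Real.Gamma_zero]
  · rw [Real.Gamma_add_one hs, mul_inv, mul_inv_cancel_left₀ hs]

lemma inv_Gamma_add_one_mul_inv_Gamma_neg (s : ℝ) :
    (Real.Gamma (s + 1))⁻¹ * (Real.Gamma (-s))⁻¹ = -(Real.sin (Real.pi * s) / Real.pi) := by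
  have reflection := Real.Gamma_mul_Gamma_one_sub (-s)
  rw [sub_neg_eq_add, add_comm 1 s, mul_neg, Real.sin_neg] at reflection
  rw [mul_comm, ← mul_inv, reflection, inv_div, neg_div]

lemma sin_pi_mul_nonneg_of_mem_Icc {x : ℝ} (k : ℤ) (hx : x ∈ Set.Icc (2 * k : ℝ) (2 * k + 1)) :
    0 ≤ Real.sin (Real.pi * x) := by
  rw [← Real.sin_sub_int_mul_two_pi _ k]
  apply Real.sin_nonneg_of_nonneg_of_le_pi <;> nlinarith [hx.1, hx.2, Real.pi_pos]

/-- The `m`-th Taylor coefficient `1 / (m! Γ(m + μ + 1))` of the Bessel–Clifford function. It is `0`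
at the poles of `Γ`, where `Real.Gamma` has the value `0`. -/
noncomputable def besselCliffordCoeff (μ : ℝ) (m : ℕ) : ℝ :=
  (m.factorial : ℝ)⁻¹ * (Real.Gamma (m + μ + 1))⁻¹

/-- The Bessel–Clifford function `C_μ`, the entire factor of the Bessel function `J_μ`: one has
`J_μ(x) = (x/2)^μ C_μ(-(x/2)²)` for `x > 0`. -/
noncomputable def besselClifford (μ z : ℝ) : ℝ := ∑' m, besselCliffordCoeff μ m * z ^ m

lemma succ_mul_besselCliffordCoeff_succ (μ : ℝ) (m : ℕ) :
    (m + 1) * besselCliffordCoeff μ (m + 1) = besselCliffordCoeff (μ + 1) m := by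
  have hΓ : ((m + 1 : ℕ) : ℝ) + μ + 1 = m + (μ + 1) + 1 := by push_cast; ring
  rw [besselCliffordCoeff, besselCliffordCoeff, hΓ, Nat.factorial_succ]
  push_cast
  field_simp

lemma add_mul_besselCliffordCoeff_add_one (μ : ℝ) (m : ℕ) :
    (m + μ + 1) * besselCliffordCoeff (μ + 1) m = besselCliffordCoeff μ m := by
  rw [besselCliffordCoeff, besselCliffordCoeff, inv_Gamma_eq_self_mul_inv_Gamma_add_one (m + μ + 1),
    ← add_assoc (m : ℝ) μ 1]
  ring

lemma summable_besselCliffordCoeff_mul_pow (μ z : ℝ) :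
    Summable fun m ↦ besselCliffordCoeff μ m * z ^ m := by
  apply summable_of_ratio_norm_eventually_le (r := 1 / 2) (by norm_num)
  obtain ⟨N, hN⟩ := exists_nat_ge (|μ| + 2 * |z|)
  filter_upwards [Filter.eventually_ge_atTop N] with m hm
  have hm' : |μ| + 2 * |z| ≤ m := hN.trans (by exact_mod_cast hm)
  have coeff_ratio : (m + 1) * (m + μ + 1) * besselCliffordCoeff μ (m + 1) =
      besselCliffordCoeff μ m := by
    rw [← add_mul_besselCliffordCoeff_add_one μ m, ← succ_mul_besselCliffordCoeff_succ]
    ring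
  have ratio_ge : 2 * |z| ≤ (m + 1) * |m + μ + 1| := by
    have one_le : 1 ≤ |m + μ + 1| :=
      le_trans (by linarith [neg_abs_le μ, abs_nonneg z]) (le_abs_self _)
    nlinarith [abs_nonneg μ, abs_nonneg z]
  rw [← coeff_ratio]
  simp only [norm_mul, norm_pow, Real.norm_eq_abs, pow_succ]
  rw [abs_of_nonneg (by positivity : (0 : ℝ) ≤ m + 1)]
  calc |besselCliffordCoeff μ (m + 1)| * (|z| ^ m * |z|)
      = 1 / 2 * (2 * |z| * |besselCliffordCoeff μ (m + 1)| * |z| ^ m) := by ring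
    _ ≤ 1 / 2 * ((m + 1) * |m + μ + 1| * |besselCliffordCoeff μ (m + 1)| * |z| ^ m) := by gcongr

lemma hasDerivAt_besselClifford (μ z : ℝ) :
    HasDerivAt (besselClifford μ) (besselClifford (μ + 1) z) z := by
  have derivative_summable (z : ℝ) :
      Summable fun m : ℕ ↦ (m + 1) * besselCliffordCoeff μ (m + 1) * z ^ m := by
    simpa only [succ_mul_besselCliffordCoeff_succ] using
      summable_besselCliffordCoeff_mul_pow (μ + 1) z
  exact (hasDerivAt_tsum_mul_pow derivative_summable z).congr_deriv <|
    tsum_congr fun m ↦ by rw [succ_mul_besselCliffordCoeff_succ]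

lemma besselClifford_eq_add (μ z : ℝ) :
    besselClifford μ z = (μ + 1) * besselClifford (μ + 1) z + z * besselClifford (μ + 2) z := by
  have hasSum (μ : ℝ) : HasSum (fun m ↦ besselCliffordCoeff μ m * z ^ m) (besselClifford μ z) :=
    (summable_besselCliffordCoeff_mul_pow μ z).hasSum
  have hasSum_nat_mul : HasSum (fun m : ℕ ↦ m * besselCliffordCoeff (μ + 1) m * z ^ m)
      (z * besselClifford (μ + 2) z) := by
    refine (hasSum_nat_add_iff' 1).1 ?_
    convert! (hasSum (μ + 2)).mul_left z using 1
    · funext m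
      rw [show μ + 2 = μ + 1 + 1 by ring, ← succ_mul_besselCliffordCoeff_succ (μ + 1) m]
      push_cast
      ring
    · simp
  refine (hasSum μ).unique ((((hasSum (μ + 1)).mul_left (μ + 1)).add hasSum_nat_mul).congr_fun ?_)
  intro m
  rw [← add_mul_besselCliffordCoeff_add_one]
  ring

lemma besselClifford_zero (μ : ℝ) : besselClifford μ 0 = (Real.Gamma (μ + 1))⁻¹ := by
  rw [besselClifford, tsum_eq_single 0 fun m hm ↦ by simp [hm]]
  simp [besselCliffordCoeff]

lemma besselClifford_mul_besselClifford_neg_sub_one_sub (ν z : ℝ) :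
    besselClifford ν z * besselClifford (-ν - 1) z
      - z * (besselClifford (ν + 1) z * besselClifford (-ν) z) =
      -(Real.sin (Real.pi * ν) / Real.pi) := by
  set W : ℝ → ℝ := fun z ↦ besselClifford ν z * besselClifford (-ν - 1) z
    - z * (besselClifford (ν + 1) z * besselClifford (-ν) z) with hW
  have hasDerivAt_W (x : ℝ) : HasDerivAt W 0 x := by
    refine (((hasDerivAt_besselClifford ν x).mul (hasDerivAt_besselClifford (-ν - 1) x)).sub
      ((hasDerivAt_id x).mul ((hasDerivAt_besselClifford (ν + 1) x).mul
        (hasDerivAt_besselClifford (-ν) x)))).congr_deriv ?_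
    have rec_pos := besselClifford_eq_add ν x
    have rec_neg := besselClifford_eq_add (-ν - 1) x
    rw [show -ν - 1 + 1 = -ν by ring, show -ν - 1 + 2 = -ν + 1 by ring] at rec_neg
    rw [show -ν - 1 + 1 = -ν by ring, show ν + 1 + 1 = ν + 2 by ring]
    simp only [Pi.mul_apply, id_eq]
    linear_combination besselClifford (-ν) x * rec_pos + besselClifford (ν + 1) x * rec_neg
  calc W z = W 0 := is_const_of_deriv_eq_zero (fun x ↦ (hasDerivAt_W x).differentiableAt)
        (fun x ↦ (hasDerivAt_W x).deriv) z 0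
    _ = (Real.Gamma (ν + 1))⁻¹ * (Real.Gamma (-ν))⁻¹ := by simp [hW, besselClifford_zero]
    _ = _ := inv_Gamma_add_one_mul_inv_Gamma_neg ν

lemma besselJ_eq_rpow_mul_besselClifford {x : ℝ} (hx : 0 < x) (μ : ℝ) :
    besselJ μ x = (x / 2) ^ μ * besselClifford μ (-(x / 2) ^ 2) := by
  rw [besselJ, besselClifford, ← tsum_mul_left]
  refine tsum_congr fun m ↦ ?_
  have rpow_split : (x / 2) ^ (2 * (m : ℝ) + μ) = ((x / 2) ^ 2) ^ m * (x / 2) ^ μ := by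
    rw [Real.rpow_add (by positivity), ← pow_mul]
    exact_mod_cast rfl
  rw [rpow_split, besselCliffordCoeff, neg_pow ((x / 2) ^ 2)]
  ring

lemma besselJ_sub_one_add_besselJ_add_one {x : ℝ} (hx : 0 < x) (μ : ℝ) :
    besselJ (μ - 1) x + besselJ (μ + 1) x = 2 * μ / x * besselJ μ x := by
  have hx2 : x / 2 ≠ 0 := by positivity
  have clifford_rec := besselClifford_eq_add (μ - 1) (-(x / 2) ^ 2)
  rw [show μ - 1 + 1 = μ by ring, show μ - 1 + 2 = μ + 1 by ring] at clifford_rec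
  simp only [besselJ_eq_rpow_mul_besselClifford hx, clifford_rec, Real.rpow_sub_one hx2,
    Real.rpow_add_one hx2]
  field_simp
  ring

lemma hasDerivAt_besselJ {x : ℝ} (hx : 0 < x) (μ : ℝ) :
    HasDerivAt (besselJ μ) (μ / x * besselJ μ x - besselJ (μ + 1) x) x := by
  have hx2 : x / 2 ≠ 0 := by positivity
  have hasDerivAt_half := (hasDerivAt_id x).div_const 2
  refine ((hasDerivAt_half.rpow_const (p := μ) (.inl hx2)).mul
    ((hasDerivAt_besselClifford μ _).comp x (hasDerivAt_half.pow 2).neg)).congr_of_eventuallyEq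
    ?_ |>.congr_deriv ?_
  · filter_upwards [lt_mem_nhds hx] with y hy
    exact besselJ_eq_rpow_mul_besselClifford hy μ
  · simp only [besselJ_eq_rpow_mul_besselClifford hx, Real.rpow_sub_one hx2,
      Real.rpow_add_one hx2, id_eq, Function.comp_apply, Pi.neg_apply, Pi.pow_apply,
      Nat.cast_ofNat, Nat.add_one_sub_one, pow_one]
    field_simp
    ring

lemma hasDerivAt_besselJ' {x : ℝ} (hx : 0 < x) (μ : ℝ) :
    HasDerivAt (besselJ μ) (besselJ (μ - 1) x - μ / x * besselJ μ x) x :=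
  (hasDerivAt_besselJ hx μ).congr_deriv <| by
    linear_combination -besselJ_sub_one_add_besselJ_add_one hx μ

lemma besselJ_mul_besselJ_neg_sub_one_add {x : ℝ} (hx : 0 < x) (ν : ℝ) :
    besselJ ν x * besselJ (-ν - 1) x + besselJ (ν + 1) x * besselJ (-ν) x =
      -(2 * Real.sin (Real.pi * ν) / (Real.pi * x)) := by
  have hx2 : 0 < x / 2 := by positivity
  have clifford := besselClifford_mul_besselClifford_neg_sub_one_sub ν (-(x / 2) ^ 2)
  have factor_out : -(2 * Real.sin (Real.pi * ν) / (Real.pi * x)) =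
      2 / x * -(Real.sin (Real.pi * ν) / Real.pi) := by field_simp
  rw [factor_out, ← clifford]
  simp only [besselJ_eq_rpow_mul_besselClifford hx, Real.rpow_sub_one hx2.ne',
    Real.rpow_add_one hx2.ne', Real.rpow_neg hx2.le]
  field_simp
  ring

lemma hasDerivAt_besselJ_neg_div_besselJ {ν x : ℝ} (hx : 0 < x) (hJ : besselJ ν x ≠ 0) :
    HasDerivAt (fun t ↦ besselJ (-ν) t / besselJ ν t)
      (-(2 * Real.sin (Real.pi * ν) / (Real.pi * x)) / besselJ ν x ^ 2) x := by
  refine ((hasDerivAt_besselJ' hx (-ν)).div (hasDerivAt_besselJ hx ν) hJ).congr_deriv ?_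
  rw [← besselJ_mul_besselJ_neg_sub_one_add hx ν]
  ring

lemma antitoneOn_besselJ_neg_div_besselJ {ν : ℝ} {s : Set ℝ} (hν : 0 ≤ Real.sin (Real.pi * ν))
    (hs : Convex ℝ s) (hs0 : s ⊆ Set.Ioi 0) (hJ : ∀ t ∈ s, besselJ ν t ≠ 0) :
    AntitoneOn (fun t ↦ besselJ (-ν) t / besselJ ν t) s := by
  have hasDerivAt_quotient (t : ℝ) (ht : t ∈ s) :=
    hasDerivAt_besselJ_neg_div_besselJ (hs0 ht) (hJ t ht)
  refine antitoneOn_of_hasDerivWithinAt_nonpos hs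
    (fun t ht ↦ (hasDerivAt_quotient t ht).continuousAt.continuousWithinAt)
    (fun t ht ↦ (hasDerivAt_quotient t (interior_subset ht)).hasDerivWithinAt) fun t ht ↦ ?_
  have ht0 : 0 < t := hs0 (interior_subset ht)
  exact div_nonpos_of_nonpos_of_nonneg (neg_nonpos.2 (by positivity)) (sq_nonneg _)

lemma besselJ_neg_mul_besselJ_le {ν a b : ℝ} (hν : 0 ≤ Real.sin (Real.pi * ν)) (ha : 0 < a)
    (hab : a ≤ b) (hJ : ∀ t ∈ Set.Icc a b, besselJ ν t ≠ 0) :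
    besselJ (-ν) b * besselJ ν a ≤ besselJ ν b * besselJ (-ν) a := by
  have ha_mem : a ∈ Set.Icc a b := Set.left_mem_Icc.2 hab
  have hb_mem : b ∈ Set.Icc a b := Set.right_mem_Icc.2 hab
  have hpos : Set.Icc a b ⊆ Set.Ioi 0 := fun t ht ↦ ha.trans_le ht.1
  have quotient_le : besselJ (-ν) b / besselJ ν b ≤ besselJ (-ν) a / besselJ ν a :=
    antitoneOn_besselJ_neg_div_besselJ hν (convex_Icc a b) hpos hJ ha_mem hb_mem hab
  have same_sign : 0 < besselJ ν a * besselJ ν b :=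
    mul_pos_of_isPreconnected_of_ne_zero isPreconnected_Icc
      (fun t ht ↦ (hasDerivAt_besselJ (hpos ht) ν).continuousAt.continuousWithinAt) hJ ha_mem hb_mem
  have hJa := hJ a ha_mem
  have hJb := hJ b hb_mem
  calc besselJ (-ν) b * besselJ ν a
      = besselJ ν a * besselJ ν b * (besselJ (-ν) b / besselJ ν b) := by field_simp
    _ ≤ besselJ ν a * besselJ ν b * (besselJ (-ν) a / besselJ ν a) := by gcongr
    _ = besselJ ν b * besselJ (-ν) a := by field_simp

theorem besselJ_combination_nonpos_general {lam ν : ℝ} (hν : 0 ≤ Real.sin (Real.pi * ν))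
    (hlam : 0 < lam) (hzero : ∀ t : ℝ, 0 < t → t ≤ Real.sqrt lam → besselJ ν t ≠ 0)
    (r s : ℝ) (hr : 0 < r) (hrs : r ≤ s) (hs : s ≤ 1) :
    r ^ ν * (besselJ (-ν) (s * Real.sqrt lam) * besselJ ν (r * Real.sqrt lam)
      - besselJ ν (s * Real.sqrt lam) * besselJ (-ν) (r * Real.sqrt lam)) ≤ 0 := by
  have hk : 0 < Real.sqrt lam := Real.sqrt_pos.2 hlam
  have hrk : 0 < r * Real.sqrt lam := mul_pos hr hk
  have hsk : s * Real.sqrt lam ≤ Real.sqrt lam := mul_le_of_le_one_left hk.le hs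
  refine mul_nonpos_of_nonneg_of_nonpos (Real.rpow_nonneg hr.le ν) (sub_nonpos.2 ?_)
  exact besselJ_neg_mul_besselJ_le hν hrk (by gcongr) fun t ht ↦
    hzero t (hrk.trans_le ht.1) (ht.2.trans hsk)

/-- **Lemma 3.2 (reverse-ordered case).** For `α ∈ (4n−1, 4n+1)`, `ν = (1−α)/2` and
`0 < λ < j²_{ν,1}`, one has
`r^ν·(J_{−ν}(s√λ)·J_ν(r√λ) − J_ν(s√λ)·J_{−ν}(r√λ)) ≤ 0` for `0 < r ≤ s ≤ 1`. -/
theorem besselJ_combination_nonpos (n : ℕ) (hn : 1 ≤ n) (α lam ν : ℝ)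
    (hα1 : 4 * (n : ℝ) - 1 < α) (hα2 : α < 4 * (n : ℝ) + 1)
    (hν : ν = (1 - α) / 2)
    (hlam : 0 < lam)
    (hzero : ∀ t : ℝ, 0 < t → t ≤ Real.sqrt lam → besselJ ν t ≠ 0) :
    ∀ r s : ℝ, 0 < r → r ≤ s → s ≤ 1 →
      r ^ ν * (besselJ (-ν) (s * Real.sqrt lam) * besselJ ν (r * Real.sqrt lam)
        - besselJ ν (s * Real.sqrt lam) * besselJ (-ν) (r * Real.sqrt lam)) ≤ 0 := by
  have hsin : 0 ≤ Real.sin (Real.pi * ν) :=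
    sin_pi_mul_nonneg_of_mem_Icc (-n) (by constructor <;> push_cast <;> linarith)
  exact besselJ_combination_nonpos_general hsin hlam hzero
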